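/- arXiv:1701.07963 — 2 statements merged into one kernel-verified Lean document; each statement's English description precedes it below -/
import Mathlib

section
/- Harary's Balance Theorem (path form): A signed graph Σ is balanced if and only if for every pair of vertices v, w, all paths from v to w have the same sign (the sign of a path being the product of the signs of its edges). -/
/-- The sign of a walk in a signed graph: the product of the signs of its edges. -/
def walkSign {V : Type*} (G : SimpleGraph V) (σ : Sym2 V → ℤˣ) {u v : V}
    (w : G.Walk u v) : ℤˣ :=
  (w.edges.map σ).prod

/-- A signed graph is balanced if every circle (cycle) is positive. -/
def sgBalanced {V : Type*} (G : SimpleGraph V) (σ : Sym2 V → ℤˣ) : Prop :=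
  ∀ ⦃v : V⦄ (w : G.Walk v v), w.IsCycle → walkSign G σ w = 1

theorem walkSign_nil {V : Type*} (G : SimpleGraph V) (σ : Sym2 V → ℤˣ) (u : V) :
    walkSign G σ (SimpleGraph.Walk.nil : G.Walk u u) = 1 := by
  simp [walkSign]

theorem walkSign_cons {V : Type*} (G : SimpleGraph V) (σ : Sym2 V → ℤˣ) {u v w : V}
    (h : G.Adj u v) (p : G.Walk v w) :
    walkSign G σ (SimpleGraph.Walk.cons h p) = σ s(u, v) * walkSign G σ p := by
  simp [walkSign]

theorem walkSign_append {V : Type*} (G : SimpleGraph V) (σ : Sym2 V → ℤˣ) {u v w : V}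
    (p : G.Walk u v) (q : G.Walk v w) :
    walkSign G σ (p.append q) = walkSign G σ p * walkSign G σ q := by
  simp [walkSign]

theorem walkSign_reverse {V : Type*} (G : SimpleGraph V) (σ : Sym2 V → ℤˣ) {u v : V}
    (p : G.Walk u v) : walkSign G σ p.reverse = walkSign G σ p := by
  simp [walkSign, List.prod_reverse]

/-- Closing a path by an edge gives sign `1` in a balanced graph. -/
theorem sign_close {V : Type*} (G : SimpleGraph V) (σ : Sym2 V → ℤˣ)
    (hb : sgBalanced G σ) {u v : V} (h : G.Adj u v) (p : G.Walk v u) (hp : p.IsPath) :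
    σ s(u, v) * walkSign G σ p = 1 := by
  by_cases he : s(u, v) ∈ p.edges
  · cases p with
    | nil => exact absurd rfl h.ne
    | @cons _ v' _ h' p' =>
      rw [SimpleGraph.Walk.cons_isPath_iff] at hp
      rw [SimpleGraph.Walk.edges_cons, List.mem_cons] at he
      rcases he with he | he
      · have huv : u = v' := by
          rw [Sym2.eq_iff] at he
          rcases he with ⟨h1, _⟩ | ⟨h1, _⟩
          · exact absurd h1 h.ne
          · exact h1
        subst huv
        have hn := SimpleGraph.Walk.isPath_iff_eq_nil.1 hp.1
        rw [hn, walkSign_cons, walkSign_nil, Sym2.eq_swap, mul_one, Int.units_mul_self]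
      · exact absurd (p'.snd_mem_support_of_mem_edges he) hp.2
  · rw [← walkSign_cons G σ h p]
    exact hb _ ((SimpleGraph.Walk.cons_isCycle_iff p h).2 ⟨hp, he⟩)

open Classical in
theorem sign_bypass {V : Type*} (G : SimpleGraph V) (σ : Sym2 V → ℤˣ)
    (hb : sgBalanced G σ) {u v : V} (p : G.Walk u v) :
    walkSign G σ p.bypass = walkSign G σ p := by
  induction p with
  | nil => rfl
  | @cons u v w h p ih =>
    rw [walkSign_cons, ← ih, SimpleGraph.Walk.bypass]
    split_ifs with hs
    · have h1 := sign_close G σ hb h (p.bypass.takeUntil u hs)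
        (p.bypass_isPath.takeUntil hs)
      have h2 : walkSign G σ p.bypass = walkSign G σ (p.bypass.takeUntil u hs)
          * walkSign G σ (p.bypass.dropUntil u hs) := by
        rw [← walkSign_append, SimpleGraph.Walk.take_spec]
      rw [h2, ← mul_assoc, h1, one_mul]
    · rw [walkSign_cons]

/-- Harary's Balance Theorem (path form): a signed graph is balanced iff for every pair
of vertices `v, w`, all paths from `v` to `w` have the same sign. -/
theorem harary_balance_paths {V : Type*} [Fintype V]
    (G : SimpleGraph V) (σ : Sym2 V → ℤˣ) :
    sgBalanced G σ ↔
      ∀ (v w : V) (p q : G.Walk v w), p.IsPath → q.IsPath →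
        walkSign G σ p = walkSign G σ q := by
  classical
  constructor
  · intro hb v w p q _ _
    have h := sign_bypass G σ hb (p.append q.reverse)
    rw [SimpleGraph.Walk.isPath_iff_eq_nil.1 (SimpleGraph.Walk.bypass_isPath (p.append q.reverse)),
      walkSign_nil, walkSign_append, walkSign_reverse] at h
    calc walkSign G σ p
        = (walkSign G σ p * walkSign G σ q) * walkSign G σ q := by
          rw [mul_assoc, Int.units_mul_self, mul_one]
      _ = walkSign G σ q := by rw [← h, one_mul]
  · intro H v w hw
    cases w with
    | nil => exact walkSign_nil G σ v
    | @cons _ b _ h p =>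
      rw [SimpleGraph.Walk.cons_isCycle_iff] at hw
      have h1 := H b v p (SimpleGraph.Walk.cons h.symm SimpleGraph.Walk.nil) hw.1
        (by simp [SimpleGraph.Walk.cons_isPath_iff, h.ne'])
      rw [walkSign_cons, h1, walkSign_cons, walkSign_nil, mul_one, Sym2.eq_swap,
        Int.units_mul_self]
end

section
/- A signed graph Σ is quasibalanced (any two negative circles of Σ have at least two common vertices) if and only if Σ has at most one unbalanced block, and that block, if it exists, is itself quasibalanced. -/
/-- A set of vertices induces an inseparable subgraph: the induced subgraph is connected
and remains connected after deleting any one of its vertices (no cutpoint). -/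
def inseparableOn {V : Type*} (G : SimpleGraph V) (S : Set V) : Prop :=
  (G.induce S).Connected ∧ ∀ v ∈ S, (G.induce (S \ {v})).Connected

/-- `S` is (the vertex set of) a block of `G`: a maximal inseparable subgraph. -/
def isBlock {V : Type*} (G : SimpleGraph V) (S : Set V) : Prop :=
  inseparableOn G S ∧ ∀ T : Set V, S ⊆ T → inseparableOn G T → T = S

/-- The signed graph restricted to `S` (e.g. a block) is balanced: every circle lying
within `S` is positive. -/
def balancedOn {V : Type*} (G : SimpleGraph V) (σ : Sym2 V → ℤˣ) (S : Set V) : Prop :=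
  ∀ ⦃a : V⦄ (w : G.Walk a a), w.IsCycle → (∀ x ∈ w.support, x ∈ S) →
    walkSign G σ w = 1

/-- The signed graph restricted to `S` is quasibalanced: any two negative circles lying
within `S` have at least two common vertices. -/
def quasibalancedOn {V : Type*} (G : SimpleGraph V) (σ : Sym2 V → ℤˣ) (S : Set V) :
    Prop :=
  ∀ ⦃a : V⦄ (w : G.Walk a a) ⦃b : V⦄ (w' : G.Walk b b),
    w.IsCycle → w'.IsCycle → (∀ x ∈ w.support, x ∈ S) → (∀ x ∈ w'.support, x ∈ S) →
    walkSign G σ w = -1 → walkSign G σ w' = -1 →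
    ∃ x y : V, x ≠ y ∧ x ∈ w.support ∧ y ∈ w.support ∧ x ∈ w'.support ∧ y ∈ w'.support

lemma inseparableOn_cycle {V : Type*} (G : SimpleGraph V) {a : V} (w : G.Walk a a)
    (hw : w.IsCycle) : inseparableOn G {x | x ∈ w.support} := by
  classical
  refine ⟨w.connected_induce_support, fun v hv => ?_⟩
  have hv' : v ∈ w.support := hv
  have hc := hw.rotate hv'
  have hs : ∀ x, x ∈ (w.rotate v hv').support ↔ x ∈ w.support :=
    fun x => w.mem_support_rotate_iff v hv'
  generalize w.rotate v hv' = c at hc hs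
  cases c with
  | nil => exact absurd hc (by simp)
  | cons h p =>
    have hp := ((SimpleGraph.Walk.cons_isCycle_iff _ _).1 hc).1
    have hn : ¬ p.Nil := fun hnil => h.ne hnil.eq.symm
    have h1 := SimpleGraph.Walk.support_dropLast_concat hn
    have h2 := hp.support_nodup
    rw [← h1] at h2
    have key : {x | x ∈ w.support} \ {v} = {x | x ∈ p.dropLast.support} := by
      ext x
      have := hs x
      rw [SimpleGraph.Walk.support_cons, ← h1] at this
      simp only [Set.mem_diff, Set.mem_setOf_eq, Set.mem_singleton_iff, ← this]
      simp only [List.mem_cons, List.mem_append, List.nodup_append, List.concat_eq_append] at *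
      grind
    rw [key]
    exact p.dropLast.connected_induce_support

lemma inseparableOn_diff {V : Type*} {G : SimpleGraph V} {S : Set V}
    (hS : inseparableOn G S) (v : V) : (G.induce (S \ {v})).Connected := by
  by_cases h : v ∈ S
  · exact hS.2 v h
  · rw [Set.diff_singleton_eq_self h]; exact hS.1

lemma inseparableOn_union {V : Type*} {G : SimpleGraph V} {S T : Set V}
    (hS : inseparableOn G S) (hT : inseparableOn G T) {x y : V} (hxy : x ≠ y)
    (hxS : x ∈ S) (hyS : y ∈ S) (hxT : x ∈ T) (hyT : y ∈ T) :
    inseparableOn G (S ∪ T) := by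
  refine ⟨SimpleGraph.induce_union_connected hS.1.preconnected hT.1.preconnected
    ⟨x, hxS, hxT⟩, fun v _ => ?_⟩
  rw [Set.union_diff_distrib]
  refine SimpleGraph.induce_union_connected (inseparableOn_diff hS v).preconnected
    (inseparableOn_diff hT v).preconnected ?_
  by_cases h : x = v
  · exact ⟨y, ⟨hyS, fun e => hxy (h.trans (Eq.symm e))⟩, ⟨hyT, fun e => hxy (h.trans (Eq.symm e))⟩⟩
  · exact ⟨x, ⟨hxS, h⟩, ⟨hxT, h⟩⟩

lemma exists_block_cycle {V : Type*} [Fintype V] (G : SimpleGraph V) {a : V} (w : G.Walk a a)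
    (hw : w.IsCycle) : ∃ S, isBlock G S ∧ ∀ x ∈ w.support, x ∈ S := by
  obtain ⟨S, hS, hm⟩ := Finite.exists_le_maximal (p := inseparableOn G) (inseparableOn_cycle G w hw)
  exact ⟨S, ⟨hm.prop, fun T hST hT => (hm.eq_of_le hT hST).symm⟩, fun x hx => hS hx⟩

lemma exists_negative_of_not_balancedOn {V : Type*} {G : SimpleGraph V} {σ : Sym2 V → ℤˣ}
    {S : Set V} (h : ¬ balancedOn G σ S) : ∃ (a : V) (w : G.Walk a a), w.IsCycle ∧
      (∀ x ∈ w.support, x ∈ S) ∧ walkSign G σ w = -1 := by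
  unfold balancedOn at h
  push Not at h
  obtain ⟨a, w, hw, hs, hn⟩ := h
  exact ⟨a, w, hw, hs, (Int.units_eq_one_or _).resolve_left hn⟩

/-- A signed graph is quasibalanced (any two negative circles share at least two
vertices) iff it has at most one unbalanced block and that block, if it exists, is
itself quasibalanced. -/
theorem quasibalanced_iff_blocks {V : Type*} [Fintype V]
    (G : SimpleGraph V) (σ : Sym2 V → ℤˣ) :
    quasibalancedOn G σ Set.univ ↔
      ((∀ S T : Set V, isBlock G S → isBlock G T →
          ¬ balancedOn G σ S → ¬ balancedOn G σ T → S = T) ∧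
        ∀ S : Set V, isBlock G S → ¬ balancedOn G σ S → quasibalancedOn G σ S) := by
  constructor
  · intro hq
    refine ⟨fun S T hS hT hbS hbT => ?_, fun S _ _ a w b w' hw hw' _ _ hn hn' =>
      hq w w' hw hw' (fun _ _ => trivial) (fun _ _ => trivial) hn hn'⟩
    obtain ⟨a, w, hw, hs, hn⟩ := exists_negative_of_not_balancedOn hbS
    obtain ⟨b, w', hw', hs', hn'⟩ := exists_negative_of_not_balancedOn hbT
    obtain ⟨x, y, hxy, hx, hy, hx', hy'⟩ :=
      hq w w' hw hw' (fun _ _ => trivial) (fun _ _ => trivial) hn hn'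
    have hU := inseparableOn_union hS.1 hT.1 hxy (hs x hx) (hs y hy) (hs' x hx') (hs' y hy')
    exact (hS.2 _ Set.subset_union_left hU).symm.trans (hT.2 _ Set.subset_union_right hU)
  · rintro ⟨h1, h2⟩ a w b w' hw hw' - - hn hn'
    obtain ⟨S, hS, hs⟩ := exists_block_cycle G w hw
    obtain ⟨T, hT, hs'⟩ := exists_block_cycle G w' hw'
    have hbS : ¬ balancedOn G σ S := fun hb => by
      have := hb w hw hs
      rw [hn] at this
      exact absurd this (by decide)
    have hbT : ¬ balancedOn G σ T := fun hb => by
      have := hb w' hw' hs'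
      rw [hn'] at this
      exact absurd this (by decide)
    obtain rfl := h1 S T hS hT hbS hbT
    exact h2 S hS hbS w w' hw hw' hs hs' hn hn'
end
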